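/- For every finite simple graph G with vertex set {v_1, …, v_n} and maximum degree at most 3, there exist sets f_1, …, f_n ⊆ ℝ³, where each f_i is the convex hull of a set of at most three points (a possibly degenerate triangle), such that for all i ≠ j: f_i ∩ f_j ≠ ∅ if and only if v_i v_j is an edge of G; moreover, for all i ≠ j, the intersection f_i ∩ f_j is contained in the set of common defining vertices of the two triangles (any two triangles are disjoint except possibly at shared corner points). -/

import Mathlib

def InS (m r1 r2 s : ℤ) : Prop := (2*s < m ↔ (r1 ≤ s ∧ s < r2))

def Spt1 (m : ℤ) (A B : Set ℤ) : Prop := ∃ r1 r2, r1 ≤ r2 ∧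
     (∀ s ∈ A, 2*s ≠ m → InS m r1 r2 s) ∧ (∀ s ∈ B, 2*s ≠ m → ¬ InS m r1 r2 s)

def Spt (m : ℤ) (A B : Set ℤ) : Prop := Spt1 m A B ∨ Spt1 m B A

lemma Spt.symm {m A B} (h : Spt m A B) : Spt m B A := Or.symm h

lemma Spt1.mono {m A B A' B'} (h : Spt1 m A B) (hA : ∀ s ∈ A', 2*s ≠ m → s ∈ A)
    (hB : ∀ s ∈ B', 2*s ≠ m → s ∈ B) : Spt1 m A' B' := by
  obtain ⟨r1, r2, h1, h2, h3⟩ := h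
  exact ⟨r1, r2, h1, fun s hs hm => h2 s (hA s hs hm) hm, fun s hs hm => h3 s (hB s hs hm) hm⟩

lemma Spt.mono {m A B A' B'} (h : Spt m A B) (hA : ∀ s ∈ A', 2*s ≠ m → s ∈ A)
    (hB : ∀ s ∈ B', 2*s ≠ m → s ∈ B) : Spt m A' B' :=
  h.imp (fun h => h.mono hA hB) (fun h => h.mono hB hA)

lemma sep_bb (p a a' b b' : ℤ) (ha : a' = a ∨ a' = a+1) (hb : b' = b ∨ b' = b+1)
    (h1 : p ≠ a) (h2 : p ≠ a') (h3 : p ≠ b) (h4 : p ≠ b') (h5 : a ≠ b) (h6 : a ≠ b')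
    (h7 : a' ≠ b) (h8 : a' ≠ b') : Spt (2*p) {a, a'} {b, b'} := by
  simp only [Spt, Spt1, Set.mem_insert_iff, Set.mem_singleton_iff, forall_eq_or_imp, forall_eq, InS]
  rcases lt_or_gt_of_ne h1 with h | h <;> rcases lt_or_gt_of_ne h3 with h' | h' <;>
  first
  | exact Or.inl ⟨p, p, by omega⟩
  | exact Or.inr ⟨p, p, by omega⟩
  | exact Or.inl ⟨a, a'+1, by omega⟩
  | exact Or.inl ⟨b, b'+1, by omega⟩

lemma sep_bp (p e x b b' : ℤ) (he : e = 1 ∨ e = -1) (hb : b' = b ∨ b' = b+1)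
    (h1 : p ≠ x) (h3 : p ≠ b) (h4 : p ≠ b') (h5 : p + e ≠ b) (h6 : p + e ≠ b')
    (h7 : x ≠ b) (h8 : x ≠ b') : Spt (2*p) {p+e, x} {b, b'} := by
  simp only [Spt, Spt1, Set.mem_insert_iff, Set.mem_singleton_iff, forall_eq_or_imp, forall_eq, InS]
  rcases lt_or_gt_of_ne h1 with h | h <;> rcases lt_or_gt_of_ne h3 with h' | h' <;> rcases he with he | he <;>
  first
  | exact Or.inl ⟨p, p, by omega⟩
  | exact Or.inr ⟨p, p, by omega⟩
  | exact Or.inl ⟨x, x+1, by omega⟩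
  | exact Or.inr ⟨x, x+1, by omega⟩
  | exact Or.inl ⟨b, b'+1, by omega⟩
  | exact Or.inr ⟨b, b'+1, by omega⟩
  | exact Or.inl ⟨p+e, p+e+1, by omega⟩
  | exact Or.inr ⟨p+e, p+e+1, by omega⟩

lemma sep_pp (p x y : ℤ) (h1 : p ≠ x) (h2 : p ≠ y) (h3 : x ≠ y) (h4 : x ≠ p-1) (h5 : y ≠ p+1) :
    Spt (2*p) {p+1, x} {p-1, y} := by
  simp only [Spt, Spt1, Set.mem_insert_iff, Set.mem_singleton_iff, forall_eq_or_imp, forall_eq, InS]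
  rcases lt_or_gt_of_ne h1 with h | h <;> rcases lt_or_gt_of_ne h2 with h' | h' <;>
  first
  | exact Or.inl ⟨p, p, by omega⟩
  | exact Or.inr ⟨p, p, by omega⟩
  | exact Or.inl ⟨x, x+1, by omega⟩
  | exact Or.inr ⟨x, x+1, by omega⟩
  | exact Or.inl ⟨y, y+1, by omega⟩
  | exact Or.inr ⟨y, y+1, by omega⟩
  | exact Or.inl ⟨p-1, p+2, by omega⟩
  | exact Or.inr ⟨p-1, p+2, by omega⟩

/-- shape of a triple minus `p` -/
lemma shape (a a' x p : ℤ) (ha : a' = a ∨ a' = a+1) (hp : p = a ∨ p = a' ∨ p = x) :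
    (∃ u u', (u' = u ∨ u' = u+1) ∧ p ≠ u ∧ p ≠ u' ∧ (∀ s, (s = u ∨ s = u') → (s = a ∨ s = a' ∨ s = x)) ∧
      ∀ s, (s = a ∨ s = a' ∨ s = x) → s ≠ p → (s = u ∨ s = u')) ∨
    (∃ e u, (e = 1 ∨ e = -1) ∧ p ≠ u ∧ (∀ s, (s = p+e ∨ s = u) → (s = a ∨ s = a' ∨ s = x)) ∧
      ∀ s, (s = a ∨ s = a' ∨ s = x) → s ≠ p → (s = p+e ∨ s = u)) ∨
    (∀ s, (s = a ∨ s = a' ∨ s = x) → s = p) := by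
  simp only [forall_eq_or_imp, forall_eq]
  by_cases hx : x = p
  · by_cases h1 : a = p
    · by_cases h2 : a' = p
      · right; right; omega
      · left; exact ⟨a', a', by omega⟩
    · by_cases h2 : a' = p
      · left; exact ⟨a, a, by omega⟩
      · left; exact ⟨a, a', by omega⟩
  · by_cases h : a = a'
    · left; exact ⟨x, x, by omega⟩
    · right; left
      by_cases h1 : a = p
      · exact ⟨1, x, by omega⟩
      · exact ⟨-1, x, by omega⟩

lemma sep_empty (b b' y p : ℤ) (hb : b' = b ∨ b' = b+1)
    (hpB : p = b ∨ p = b' ∨ p = y) (A : Set ℤ) (hA : ∀ s ∈ A, s = p) :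
    Spt (2*p) A {b, b', y} := by
  obtain ⟨M, hM⟩ : ∃ M : ℤ, b < M ∧ b' < M ∧ y < M ∧ p + 1 < M := 
    ⟨max (max b b') (max y (p+1)) + 1, by omega⟩
  rcases shape b b' y p hb hpB with ⟨v, v', hv, pv, pv', hv1, hv2⟩ | ⟨f, v, hf, pv, hv1, hv2⟩ | hB
  · have e1 := hv1 v (by simp)
    have e2 := hv1 v' (by simp)
    refine (sep_bb p M M v v' (by omega) hv (by omega) (by omega) pv pv' (by omega) (by omega) (by omega) (by omega)).mono ?_ ?_
    · intro s hs hm; have := hA s hs; omega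
    · intro s hs hm; simp at hs ⊢; exact hv2 s hs (by omega)
  · have e1 := hv1 v (by simp)
    have e2 := hv1 (p+f) (by simp)
    refine (Spt.symm (sep_bp p f v M M hf (by omega) pv (by omega) (by omega) (by omega) (by omega) (by omega) (by omega))).mono ?_ ?_
    · intro s hs hm; have := hA s hs; omega
    · intro s hs hm; simp at hs ⊢; exact hv2 s hs (by omega)
  · left
    refine ⟨p, p, le_rfl, ?_, ?_⟩
    · intro s hs hm; have := hA s hs; omega
    · intro s hs hm; have := hB s hs; omega

lemma sep_shared (a a' x b b' y p : ℤ) (ha : a' = a ∨ a' = a+1) (hb : b' = b ∨ b' = b+1)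
    (hpA : p = a ∨ p = a' ∨ p = x) (hpB : p = b ∨ p = b' ∨ p = y)
    (hd : ∀ s, (s = a ∨ s = a' ∨ s = x) → (s = b ∨ s = b' ∨ s = y) → s = p) :
    Spt (2*p) {a, a', x} {b, b', y} := by
  have hA := shape a a' x p ha hpA
  have hB := shape b b' y p hb hpB
  rcases hA with ⟨u, u', hu, pu, pu', hu1, hu2⟩ | ⟨e, u, he, pu, hu1, hu2⟩ | hA
  · rcases hB with ⟨v, v', hv, pv, pv', hv1, hv2⟩ | ⟨f, v, hf, pv, hv1, hv2⟩ | hB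
    · have d1 := hd u (hu1 u (by simp))
      have d2 := hd u' (hu1 u' (by simp))
      have e1 := hv1 v (by simp)
      have e2 := hv1 v' (by simp)
      refine (sep_bb p u u' v v' hu hv pu pu' pv pv' ?_ ?_ ?_ ?_).mono ?_ ?_
      · grind
      · grind
      · grind
      · grind
      · intro s hs hm; simp at hs ⊢; exact hu2 s hs (by omega)
      · intro s hs hm; simp at hs ⊢; exact hv2 s hs (by omega)
    · have d1 := hd u (hu1 u (by simp))
      have d2 := hd u' (hu1 u' (by simp))
      have e1 := hv1 v (by simp)
      have e2 := hv1 (p+f) (by simp)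
      refine (Spt.symm (sep_bp p f v u u' hf hu pv pu pu' ?_ ?_ ?_ ?_)).mono ?_ ?_
      · grind
      · grind
      · grind
      · grind
      · intro s hs hm; simp at hs ⊢; exact hu2 s hs (by omega)
      · intro s hs hm; simp at hs ⊢; exact hv2 s hs (by omega)
    · exact (sep_empty a a' x p ha hpA {b, b', y} hB).symm
  · rcases hB with ⟨v, v', hv, pv, pv', hv1, hv2⟩ | ⟨f, v, hf, pv, hv1, hv2⟩ | hB
    · have d1 := hd u (hu1 u (by simp))
      have d2 := hd (p+e) (hu1 _ (by simp))
      have e1 := hv1 v (by simp)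
      have e2 := hv1 v' (by simp)
      refine (sep_bp p e u v v' he hv pu pv pv' ?_ ?_ ?_ ?_).mono ?_ ?_
      · grind
      · grind
      · grind
      · grind
      · intro s hs hm; simp at hs ⊢; exact hu2 s hs (by omega)
      · intro s hs hm; simp at hs ⊢; exact hv2 s hs (by omega)
    · have d1 := hd u (hu1 u (by simp))
      have d2 := hd (p+e) (hu1 _ (by simp))
      have e1 := hv1 v (by simp)
      have e2 := hv1 (p+f) (by simp)
      rcases he with rfl | rfl <;> rcases hf with rfl | rfl
      · exfalso; grind
      · refine (sep_pp p u v pu pv ?_ ?_ ?_).mono ?_ ?_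
        · grind
        · grind
        · grind
        · intro s hs hm; simp at hs ⊢; exact hu2 s hs (by omega)
        · intro s hs hm; simp at hs ⊢; exact hv2 s hs (by omega)
      · refine (Spt.symm (sep_pp p v u pv pu ?_ ?_ ?_)).mono ?_ ?_
        · grind
        · grind
        · grind
        · intro s hs hm; simp at hs ⊢; exact hu2 s hs (by omega)
        · intro s hs hm; simp at hs ⊢; exact hv2 s hs (by omega)
      · exfalso; grind
    · exact (sep_empty a a' x p ha hpA {b, b', y} hB).symm
  · exact sep_empty b b' y p hb hpB {a, a', x} hA

lemma lt_blk {f f' g : ℤ} (hf : f' = f ∨ f' = f+1) (h : f < g) (h' : f' ≠ g) : f' < g := by omega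

lemma sep_ord (f f' h h' g g' k k' : ℤ) (hf : f' = f ∨ f' = f+1) (hh : h' = h ∨ h' = h+1)
    (hg : g' = g ∨ g' = g+1) (hk : k' = k ∨ k' = k+1) (o1 : f ≤ h) (o2 : g ≤ k) (o3 : f < g)
    (d1 : ∀ s, (s = f ∨ s = f') ∨ (s = h ∨ s = h') → (s = g ∨ s = g') ∨ (s = k ∨ s = k') → False) :
    ∃ r, Spt (2*r-1) {s | (s = f ∨ s = f') ∨ (s = h ∨ s = h')} {s | (s = g ∨ s = g') ∨ (s = k ∨ s = k')} := by
  have h1 : f ≠ g ∧ f ≠ g' ∧ f ≠ k ∧ f ≠ k' := by have := d1 f (by simp); tauto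
  have h2 : f' ≠ g ∧ f' ≠ g' ∧ f' ≠ k ∧ f' ≠ k' := by have := d1 f' (by simp); tauto
  have h3 : h ≠ g ∧ h ≠ g' ∧ h ≠ k ∧ h ≠ k' := by have := d1 h (by simp); tauto
  have h4 : h' ≠ g ∧ h' ≠ g' ∧ h' ≠ k ∧ h' ≠ k' := by have := d1 h' (by simp); tauto
  clear d1
  have q0 : f' < g := lt_blk hf o3 h2.1
  refine ⟨g, Or.inr ?_⟩
  simp only [Spt1, Set.mem_ofPred_eq, InS]
  by_cases c1 : h < g
  · have q1 : h' < g := lt_blk hh c1 h4.1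
    clear h1 h2 h3 h4
    refine ⟨g, g, by omega, ?_, ?_⟩ <;> rintro s ((rfl | rfl) | (rfl | rfl)) - <;> omega
  · by_cases c2 : h < k
    · have q1 : g' < h := lt_blk hg (lt_of_le_of_ne (not_lt.1 c1) h3.1.symm) h3.2.1.symm
      have q2 : h' < k := lt_blk hh c2 h4.2.2.1
      clear h1 h2 h3 h4
      refine ⟨h, k, by omega, ?_, ?_⟩ <;> rintro s ((rfl | rfl) | (rfl | rfl)) - <;> omega
    · have q1 : g' < h := lt_blk hg (lt_of_le_of_ne (not_lt.1 c1) h3.1.symm) h3.2.1.symm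
      have q2 : k' < h := lt_blk hk (lt_of_le_of_ne (not_lt.1 c2) h3.2.2.1.symm) h3.2.2.2.symm
      clear h1 h2 h3 h4
      refine ⟨h, h+2, by omega, ?_, ?_⟩ <;> rintro s ((rfl | rfl) | (rfl | rfl)) - <;> omega

lemma sep_disj (a a' x b b' y : ℤ) (ha : a' = a ∨ a' = a+1) (hb : b' = b ∨ b' = b+1)
    (hd : ∀ s, (s = a ∨ s = a' ∨ s = x) → (s = b ∨ s = b' ∨ s = y) → False) :
    ∃ r, Spt (2*r-1) {a, a', x} {b, b', y} := by
  have key : ∃ f f' h h' g g' k k' : ℤ, (f' = f ∨ f' = f+1) ∧ (h' = h ∨ h' = h+1) ∧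
      (g' = g ∨ g' = g+1) ∧ (k' = k ∨ k' = k+1) ∧ f ≤ h ∧ g ≤ k ∧ 
      (∀ s, (s = f ∨ s = f') ∨ (s = h ∨ s = h') ↔ (s = a ∨ s = a' ∨ s = x)) ∧
      (∀ s, (s = g ∨ s = g') ∨ (s = k ∨ s = k') ↔ (s = b ∨ s = b' ∨ s = y)) := by
    rcases le_total a x with h | h <;> rcases le_total b y with h' | h'
    · exact ⟨a, a', x, x, b, b', y, y, ha, by simp, hb, by simp, h, h', by grind, by grind⟩
    · exact ⟨a, a', x, x, y, y, b, b', ha, by simp, by simp, hb, h, h', by grind, by grind⟩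
    · exact ⟨x, x, a, a', b, b', y, y, by simp, ha, hb, by simp, h, h', by grind, by grind⟩
    · exact ⟨x, x, a, a', y, y, b, b', by simp, ha, by simp, hb, h, h', by grind, by grind⟩
  obtain ⟨f, f', h, h', g, g', k, k', hf, hh, hg, hk, o1, o2, e1, e2⟩ := key
  have d : ∀ s, (s = f ∨ s = f') ∨ (s = h ∨ s = h') → (s = g ∨ s = g') ∨ (s = k ∨ s = k') → False :=
    fun s h1 h2 => hd s ((e1 s).1 h1) ((e2 s).1 h2)
  rcases lt_trichotomy f g with o | o | o
  · obtain ⟨r, hr⟩ := sep_ord f f' h h' g g' k k' hf hh hg hk o1 o2 o d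
    exact ⟨r, hr.mono (fun s hs _ => (e1 s).2 hs) (fun s hs _ => (e2 s).2 hs)⟩
  · exact (d f (by simp) (by simp [o])).elim
  · obtain ⟨r, hr⟩ := sep_ord g g' k k' f f' h h' hg hk hf hh o2 o1 o (fun s h1 h2 => d s h2 h1)
    exact ⟨r, hr.symm.mono (fun s hs _ => (e1 s).2 hs) (fun s hs _ => (e2 s).2 hs)⟩

/-- a cubic separating the two triples -/
lemma sep_poly (a a' x b b' y : ℤ) (ha : a' = a ∨ a' = a+1) (hb : b' = b ∨ b' = b+1)
    (hd : ∀ s t, (s = a ∨ s = a' ∨ s = x) → (s = b ∨ s = b' ∨ s = y) →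
      (t = a ∨ t = a' ∨ t = x) → (t = b ∨ t = b' ∨ t = y) → s = t) :
    ∃ c0 c1 c2 c3 p : ℤ,
      (∀ s, (s = a ∨ s = a' ∨ s = x) → 0 ≤ c0 + c1 * s + c2 * s^2 + c3 * s^3 ∧
        (c0 + c1 * s + c2 * s^2 + c3 * s^3 = 0 → s = p ∧ (s = b ∨ s = b' ∨ s = y))) ∧
      (∀ s, (s = b ∨ s = b' ∨ s = y) → c0 + c1 * s + c2 * s^2 + c3 * s^3 ≤ 0) := by
  have key : ∃ m p : ℤ, (∀ s, (s = a ∨ s = a' ∨ s = x) → 2*s = m → 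
      s = p ∧ (s = b ∨ s = b' ∨ s = y)) ∧ Spt m {a, a', x} {b, b', y} := by
    by_cases h : ∃ p, (p = a ∨ p = a' ∨ p = x) ∧ (p = b ∨ p = b' ∨ p = y)
    · obtain ⟨p, h1, h2⟩ := h
      refine ⟨2*p, p, ?_, sep_shared a a' x b b' y p ha hb h1 h2 (fun s h3 h4 => hd s p h3 h4 h1 h2)⟩
      intro s hs hm
      obtain rfl : s = p := by omega
      exact ⟨rfl, h2⟩
    · obtain ⟨r, hr⟩ := sep_disj a a' x b b' y ha hb (fun s h1 h2 => h ⟨s, h1, h2⟩)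
      exact ⟨2*r-1, 0, by omega, hr⟩
  obtain ⟨m, p, hm, hs⟩ := key
  have pos : ∀ r1 r2 s : ℤ, r1 ≤ r2 → 2*s ≠ m → InS m r1 r2 s → 
      0 < (2*s-m)*(2*s-2*r1+1)*(2*s-2*r2+1) := by
    intro r1 r2 s hr h1 h2
    unfold InS at h2
    by_cases h3 : 2*s < m
    · have := h2.1 h3
      have h4 : 2*s-2*r2+1 < 0 := by omega
      have h5 : 0 < 2*s-2*r1+1 := by omega
      exact mul_pos_of_neg_of_neg (mul_neg_of_neg_of_pos (by omega) h5) h4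
    · have h6 : ¬ (r1 ≤ s ∧ s < r2) := fun h => h3 (h2.2 h)
      by_cases h7 : r1 ≤ s
      · exact mul_pos (mul_pos (by omega) (by omega)) (by omega)
      · exact mul_pos_of_neg_of_neg (mul_neg_of_pos_of_neg (by omega) (by omega)) (by omega)
  have neg : ∀ r1 r2 s : ℤ, r1 ≤ r2 → 2*s ≠ m → ¬ InS m r1 r2 s → 
      (2*s-m)*(2*s-2*r1+1)*(2*s-2*r2+1) < 0 := by
    intro r1 r2 s hr h1 h2
    unfold InS at h2
    by_cases h3 : 2*s < m
    · by_cases h7 : r1 ≤ s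
      · exact mul_neg_of_neg_of_pos (mul_neg_of_neg_of_pos (by omega) (by omega)) (by omega)
      · exact mul_neg_of_pos_of_neg (mul_pos_of_neg_of_neg (by omega) (by omega)) (by omega)
    · have h6 : (r1 ≤ s ∧ s < r2) := by omega
      exact mul_neg_of_pos_of_neg (mul_pos (by omega) (by omega)) (by omega)
  have zero : ∀ r1 r2 s : ℤ, 2*s = m → (2*s-m)*(2*s-2*r1+1)*(2*s-2*r2+1) = 0 := by
    intro r1 r2 s h; simp [h]
  have fin : ∀ e : ℤ, ∀ r1 r2 : ℤ, 
      (∀ s, (s = a ∨ s = a' ∨ s = x) → 2*s ≠ m → 0 < e * ((2*s-m)*(2*s-2*r1+1)*(2*s-2*r2+1))) →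
      (∀ s, (s = b ∨ s = b' ∨ s = y) → 2*s ≠ m → e * ((2*s-m)*(2*s-2*r1+1)*(2*s-2*r2+1)) < 0) →
    ∃ c0 c1 c2 c3 p : ℤ,
      (∀ s, (s = a ∨ s = a' ∨ s = x) → 0 ≤ c0 + c1 * s + c2 * s^2 + c3 * s^3 ∧
        (c0 + c1 * s + c2 * s^2 + c3 * s^3 = 0 → s = p ∧ (s = b ∨ s = b' ∨ s = y))) ∧
      (∀ s, (s = b ∨ s = b' ∨ s = y) → c0 + c1 * s + c2 * s^2 + c3 * s^3 ≤ 0) := by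
    intro e r1 r2 hA hB
    refine ⟨e*(-m*(1-2*r1)*(1-2*r2)), 
      e*(2*(1-2*r1)*(1-2*r2) - m*2*(1-2*r1) - m*2*(1-2*r2)),
      e*(4*(1-2*r1) + 4*(1-2*r2) - 4*m), e*8, p, ?_⟩
    have E : ∀ s, e*(-m*(1-2*r1)*(1-2*r2)) +
      e*(2*(1-2*r1)*(1-2*r2) - m*2*(1-2*r1) - m*2*(1-2*r2)) * s +
      e*(4*(1-2*r1) + 4*(1-2*r2) - 4*m) * s^2 + e*8*s^3 =
       e * ((2*s-m)*(2*s-2*r1+1)*(2*s-2*r2+1)) := by intro s; ring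
    simp only [E]
    refine ⟨fun s hs => ?_, fun s hs => ?_⟩
    · by_cases h : 2*s = m
      · rw [zero _ _ _ h]; exact ⟨by simp, fun _ => hm s hs h⟩
      · have := hA s hs h
        exact ⟨this.le, fun h => absurd h this.ne'⟩
    · by_cases h : 2*s = m
      · rw [zero _ _ _ h]; simp
      · exact (hB s hs h).le
  rcases hs with ⟨r1, r2, hr, h1, h2⟩ | ⟨r1, r2, hr, h1, h2⟩
  · refine fin 1 r1 r2 (fun s hs h => ?_) (fun s hs h => ?_)
    · rw [one_mul]; exact pos r1 r2 s hr h (h1 s hs h)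
    · rw [one_mul]; exact neg r1 r2 s hr h (h2 s hs h)
  · refine fin (-1) r1 r2 (fun s hs h => ?_) (fun s hs h => ?_)
    · have := neg r1 r2 s hr h (h2 s hs h); linarith
    · have := pos r1 r2 s hr h (h1 s hs h); linarith

lemma hull_zero {E : Type*} [AddCommGroup E] [Module ℝ E] (P : Finset E) (f : E →ₗ[ℝ] ℝ) (c : ℝ)
    (h0 : ∀ y ∈ P, 0 ≤ c + f y) (p : E) (hz : ∀ y ∈ P, c + f y = 0 → y = p) (x : E)
    (hx : x ∈ convexHull ℝ (P : Set E)) (hx0 : c + f x ≤ 0) : x ∈ P ∧ c + f x = 0 := by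
  rw [Finset.mem_convexHull'] at hx
  obtain ⟨w, hw, hw1, hwx⟩ := hx
  have e : ∑ y ∈ P, w y * (c + f y) = c + f x := by
    rw [← hwx, map_sum]
    simp only [mul_add, Finset.sum_add_distrib, ← Finset.sum_mul, hw1, map_smul, smul_eq_mul, one_mul]
  have nn : ∀ y ∈ P, 0 ≤ w y * (c + f y) := fun y hy => mul_nonneg (hw y hy) (h0 y hy)
  have z : ∑ y ∈ P, w y * (c + f y) = 0 := le_antisymm (e ▸ hx0) (Finset.sum_nonneg nn)
  have z' := (Finset.sum_eq_zero_iff_of_nonneg nn).1 z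
  have hp : ∀ y ∈ P, w y ≠ 0 → y = p := fun y hy hy0 =>
    hz y hy ((mul_eq_zero.1 (z' y hy)).resolve_left hy0)
  have hxp : x = p := by
    rw [← hwx]
    have : ∑ y ∈ P, w y • y = ∑ y ∈ P, w y • p := by
      refine Finset.sum_congr rfl fun y hy => ?_
      by_cases h : w y = 0
      · simp [h]
      · rw [hp y hy h]
    rw [this, ← Finset.sum_smul, hw1, one_smul]
  obtain ⟨y, hy, hy0⟩ : ∃ y ∈ P, w y ≠ 0 := by
    by_contra! h
    rw [Finset.sum_eq_zero h] at hw1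
    norm_num at hw1
  have := hp y hy hy0
  exact ⟨by rw [hxp, ← this]; exact hy, by rw [← e, z]⟩

noncomputable def mom (s : ℤ) : EuclideanSpace ℝ (Fin 3) := !₂[(s:ℝ), (s:ℝ)^2, (s:ℝ)^3]

lemma mom_inj : Function.Injective mom := by
  intro s t h
  have := congrArg (fun v : EuclideanSpace ℝ (Fin 3) => v 0) h
  simpa [mom] using this

lemma exists_fun (c1 c2 c3 : ℤ) : ∃ f : EuclideanSpace ℝ (Fin 3) →ₗ[ℝ] ℝ, ∀ s : ℤ,
    f (mom s) = c1 * s + c2 * s^2 + c3 * s^3 := by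
  refine ⟨((c1:ℝ) • (EuclideanSpace.proj (0 : Fin 3) : EuclideanSpace ℝ (Fin 3) →L[ℝ] ℝ) + (c2:ℝ) • (EuclideanSpace.proj (1 : Fin 3) : EuclideanSpace ℝ (Fin 3) →L[ℝ] ℝ) + (c3:ℝ) • (EuclideanSpace.proj (2 : Fin 3) : EuclideanSpace ℝ (Fin 3) →L[ℝ] ℝ) : EuclideanSpace ℝ (Fin 3) →L[ℝ] ℝ).toLinearMap, ?_⟩
  intro s
  simp [mom]

def Seg {V E : Type*} (t : V → Finset E) (S : Finset V) (segs : List (List E)) : Prop :=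
  segs.flatten.Nodup ∧ (∀ e, e ∈ segs.flatten) ∧
  (∀ v ∈ S, (t v).card = 3 → ∃ l ∈ segs, ∃ e ∈ t v, ∃ f ∈ t v, [e, f] <:+: l) ∧
  (∀ v ∉ S, ∀ e ∈ t v, ∃ l ∈ segs, l.head? = some e ∨ l.getLast? = some e) ∧
  (∀ e, (∀ v ∈ S, e ∉ t v) → [e] ∈ segs)

/-- joining -/
lemma Seg.join {V E : Type*} [DecidableEq V] [DecidableEq E] {t : V → Finset E} {S : Finset V} {segs : List (List E)}
    (h : Seg t S segs) (ht : ∀ e u v w, e ∈ t u → e ∈ t v → e ∈ t w → u = v ∨ v = w ∨ u = w)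
    (v : V) (hv : v ∉ S) (e f : E) (he : e ∈ t v) (hf : f ∈ t v) (l1 l2 : List E)
    (h1 : l1 ∈ segs) (h2 : l2 ∈ segs) (hne : l1 ≠ l2) (he1 : l1.head? = some e ∨ l1.getLast? = some e)
    (hf2 : l2.head? = some f ∨ l2.getLast? = some f) : ∃ segs', Seg t (insert v S) segs' := by
  obtain ⟨hnd, hall, hpair, hend, hsing⟩ := h
  obtain ⟨rest, hrest⟩ : ∃ rest, segs.Perm (l1 :: l2 :: rest) := by
    refine ⟨(segs.erase l1).erase l2, ?_⟩
    refine (List.perm_cons_erase h1).trans (List.Perm.cons _ (List.perm_cons_erase ?_))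
    exact (List.mem_erase_of_ne hne.symm).2 h2
  -- orient
  obtain ⟨k1, hk1, p1⟩ : ∃ k1, (k1 ++ [e]).Perm l1 ∧ ((k1 ++ [e]) = l1 ∨ (k1 ++ [e]) = l1.reverse) := by
    rcases he1 with h | h
    · obtain ⟨l', rfl⟩ := List.head?_eq_some_iff.1 h
      exact ⟨l'.reverse, by simpa using (List.reverse_perm (e :: l')), Or.inr (by simp)⟩
    · obtain ⟨l', rfl⟩ := List.getLast?_eq_some_iff.1 h
      exact ⟨l', List.Perm.refl _, Or.inl rfl⟩
  obtain ⟨k2, hk2, p2⟩ : ∃ k2, (f :: k2).Perm l2 ∧ ((f :: k2) = l2 ∨ (f :: k2) = l2.reverse) := by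
    rcases hf2 with h | h
    · obtain ⟨l', rfl⟩ := List.head?_eq_some_iff.1 h
      exact ⟨l', List.Perm.refl _, Or.inl rfl⟩
    · obtain ⟨l', rfl⟩ := List.getLast?_eq_some_iff.1 h
      exact ⟨l'.reverse, by simpa using (List.reverse_perm (l' ++ [f])), Or.inr (by simp)⟩
  set N := (k1 ++ [e]) ++ (f :: k2) with hN
  have hperm : (N :: rest).flatten.Perm segs.flatten := by
    refine List.Perm.trans ?_ (hrest.flatten).symm
    simp only [List.flatten_cons, hN, List.append_assoc]
    simpa using hk1.append (hk2.append_right rest.flatten)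
  have hmem : ∀ l, l ∈ segs ↔ l = l1 ∨ l = l2 ∨ l ∈ rest := by
    intro l; rw [hrest.mem_iff]; simp
  have hN1 : (k1 ++ [e]) <:+: N := ⟨[], f :: k2, by simp [hN]⟩
  have hN2 : (f :: k2) <:+: N := ⟨k1 ++ [e], [], by simp [hN]⟩
  have hnd1 : (l1 :: l2 :: rest).flatten.Nodup := (hrest.flatten).nodup_iff.1 hnd
  have hef : e ≠ f := by
    have : N.Nodup := by
      have := hperm.nodup_iff.2 hnd
      simp only [List.flatten_cons] at this
      exact (List.nodup_append.1 this).1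
    rintro rfl
    simp [hN, List.nodup_append] at this
  -- uniqueness of segment
  have uniq : ∀ g l l', l ∈ segs → l' ∈ segs → g ∈ l → g ∈ l' → l = l' := by
    intro g l l' hl hl' hg hg'
    by_contra hne
    have hpw := (List.nodup_flatten.1 hnd).2
    have : Std.Symm (List.Disjoint (α := E)) := ⟨fun _ _ h => List.Disjoint.symm h⟩
    have := hpw.forall hl hl' hne
    exact this hg hg'
  refine ⟨N :: rest, hperm.nodup_iff.2 hnd, fun x => hperm.mem_iff.2 (hall x), ?_, ?_, ?_⟩
  · intro u hu hc
    rcases Finset.mem_insert.1 hu with rfl | hu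
    · exact ⟨N, by simp, e, he, f, hf, ⟨k1, k2, by simp [hN]⟩⟩
    · obtain ⟨l, hl, a, ha, b, hb, hab⟩ := hpair u hu hc
      rcases (hmem l).1 hl with rfl | rfl | hl
      · refine ⟨N, by simp, ?_⟩
        rcases p1 with p | p
        · exact ⟨a, ha, b, hb, hab.trans (p ▸ hN1)⟩
        · refine ⟨b, hb, a, ha, List.IsInfix.trans ?_ hN1⟩
          rw [p]; simpa using List.reverse_infix.2 hab
      · refine ⟨N, by simp, ?_⟩
        rcases p2 with p | p
        · exact ⟨a, ha, b, hb, hab.trans (p ▸ hN2)⟩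
        · refine ⟨b, hb, a, ha, List.IsInfix.trans ?_ hN2⟩
          rw [p]; simpa using List.reverse_infix.2 hab
      · exact ⟨l, by simp [hl], a, ha, b, hb, hab⟩
  · intro u hu g hg
    have huv : u ≠ v := by rintro rfl; simp at hu
    have huS : u ∉ S := fun h => hu (Finset.mem_insert_of_mem h)
    have sing : g ∈ t v → [g] ∈ segs := by
      intro hgv
      refine hsing g fun w hw hgw => ?_
      rcases ht g u v w hg hgv hgw with h | h | h
      · exact huv h
      · exact hv (h ▸ hw)
      · exact huS (h ▸ hw)
    obtain ⟨l, hl, hgl⟩ := hend u huS g hg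
    have hgml : g ∈ l := by
      rcases hgl with h | h
      · exact List.mem_of_head? h
      · exact List.mem_of_getLast? h
    rcases (hmem l).1 hl with rfl | rfl | hl'
    · refine ⟨N, by simp, ?_⟩
      by_cases hge : g = e
      · subst hge
        have := uniq g [g] l (sing he) hl (by simp) hgml
        subst this
        have : k1 = [] := by
          have := hk1.length_eq; simpa using this
        left; simp [hN, this]
      · have : (k1 ++ [e]).head? = some g := by
          rcases p1 with p | p
          · rw [← p] at hgl
            rcases hgl with h | h
            · exact h
            · simp at h; exact absurd h.symm hge
          · have : l = (k1 ++ [e]).reverse := by rw [p]; simp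
            rw [this] at hgl
            rcases hgl with h | h
            · simp at h; exact absurd h.symm hge
            · rw [List.getLast?_reverse] at h; exact h
        left
        rw [hN, List.head?_append, this]; rfl
    · refine ⟨N, by simp, ?_⟩
      by_cases hge : g = f
      · subst hge
        have := uniq g [g] l (sing hf) hl (by simp) hgml
        subst this
        have : k2 = [] := by
          have := hk2.length_eq; simpa using this
        right; simp [hN, this]
      · have : (f :: k2).getLast? = some g := by
          rcases p2 with p | p
          · rw [← p] at hgl
            rcases hgl with h | h
            · simp at h; exact absurd h.symm hge
            · exact h
          · have : l = (f :: k2).reverse := by rw [p]; simp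
            rw [this] at hgl
            rcases hgl with h | h
            · rw [List.head?_reverse] at h; exact h
            · rw [List.getLast?_reverse] at h; simp at h; exact absurd h.symm hge
        right
        rw [hN, List.getLast?_append, this]; rfl
    · exact ⟨l, by simp [hl'], hgl⟩
  · intro g hg
    have h0 := hsing g (fun w hw => hg w (Finset.mem_insert_of_mem hw))
    have hgv := hg v (Finset.mem_insert_self _ _)
    rcases (hmem [g]).1 h0 with h | h | h
    · exfalso
      have : e ∈ [g] := by rw [h]; exact hk1.subset (by simp)
      simp at this; exact hgv (this ▸ he)
    · exfalso
      have : f ∈ [g] := by rw [h]; exact hk2.subset (by simp)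
      simp at this; exact hgv (this ▸ hf)
    · simp [h]

lemma exists_seg {V E : Type*} [Fintype E] [DecidableEq V] [DecidableEq E] (t : V → Finset E) 
    (ht : ∀ e u v w, e ∈ t u → e ∈ t v → e ∈ t w → u = v ∨ v = w ∨ u = w) (S : Finset V) :
    ∃ segs, Seg t S segs := by
  induction S using Finset.induction_on with
  | empty =>
    have hfl : ((Finset.univ : Finset E).toList.map (fun e => [e])).flatten = (Finset.univ : Finset E).toList := by
      induction (Finset.univ : Finset E).toList with
      | nil => simp
      | cons a l ih => simp [ih]
    refine ⟨(Finset.univ : Finset E).toList.map (fun e => [e]), ?_, ?_, ?_, ?_, ?_⟩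
    · rw [hfl]; exact Finset.nodup_toList _
    · rw [hfl]; simp
    · simp
    · intro v _ e _; exact ⟨[e], by simp, by simp⟩
    · intro e _; simp
  | insert v S hv ih =>
    obtain ⟨segs, h⟩ := ih
    by_cases hc : (t v).card = 3
    · obtain ⟨e, f, g, hef, heg, hfg, htv⟩ := Finset.card_eq_three.1 hc
      have he : e ∈ t v := by simp [htv]
      have hf : f ∈ t v := by simp [htv]
      have hg : g ∈ t v := by simp [htv]
      obtain ⟨l1, h1, he1⟩ := h.2.2.2.1 v hv e he
      obtain ⟨l2, h2, he2⟩ := h.2.2.2.1 v hv f hf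
      obtain ⟨l3, h3, he3⟩ := h.2.2.2.1 v hv g hg
      by_cases c1 : l1 = l2
      · by_cases c2 : l1 = l3
        · exfalso
          subst c1; subst c2
          grind
        · exact h.join ht v hv e g he hg l1 l3 h1 h3 c2 he1 he3
      · exact h.join ht v hv e f he hf l1 l2 h1 h2 c1 he1 he2
    · obtain ⟨h1, h2, h3, h4, h5⟩ := h
      refine ⟨segs, h1, h2, ?_, ?_, ?_⟩
      · intro u hu hcu
        rcases Finset.mem_insert.1 hu with rfl | hu
        · exact absurd hcu hc
        · exact h3 u hu hcu
      · intro u hu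
        exact h4 u (fun h => hu (Finset.mem_insert_of_mem h))
      · intro e he
        exact h5 e (fun w hw => he w (Finset.mem_insert_of_mem hw))

lemma exists_pos {V E : Type*} [Fintype V] [Fintype E] [DecidableEq V] [DecidableEq E] (t : V → Finset E) 
    (ht : ∀ e u v w, e ∈ t u → e ∈ t v → e ∈ t w → u = v ∨ v = w ∨ u = w) :
    ∃ pos : E → ℤ, Function.Injective pos ∧ ∀ v, (t v).card = 3 → ∃ e ∈ t v, ∃ f ∈ t v, pos f = pos e + 1 := by
  obtain ⟨segs, h1, h2, h3, -, -⟩ := exists_seg t ht Finset.univ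
  refine ⟨fun e => (segs.flatten.idxOf e : ℤ), ?_, ?_⟩
  · intro a b hab
    exact (List.idxOf_inj (h2 a)).1 (Int.ofNat_inj.1 hab)
  · intro v hv
    obtain ⟨l, hl, e, he, f, hf, hi⟩ := h3 v (Finset.mem_univ _) hv
    refine ⟨e, he, f, hf, ?_⟩
    obtain ⟨A, B, hAB⟩ := hi.trans (show l <:+: segs.flatten by
      obtain ⟨s1, s2, rfl⟩ := List.append_of_mem hl
      exact ⟨s1.flatten, s2.flatten, by simp⟩)
    rw [← hAB] at h1 ⊢
    have : (A ++ [e, f] ++ B) = A ++ e :: f :: B := by simp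
    rw [this] at h1 ⊢
    rw [List.nodup_append] at h1
    have n1 : e ∉ A := fun h => h1.2.2 e h e (by simp) rfl
    have n2 : f ∉ A := fun h => h1.2.2 f h f (by simp) rfl
    have n3 : e ≠ f := by have := h1.2.1; simp at this; tauto
    beta_reduce
    rw [List.idxOf_append_of_notMem n1, List.idxOf_append_of_notMem n2]
    simp [List.idxOf_cons_ne _ n3]

lemma triple_shape {E : Type*} [DecidableEq E] (T : Finset E) (pos : E → ℤ) (hinj : Function.Injective pos)
    (hne : T.Nonempty) (hc : T.card ≤ 3) (hp : T.card = 3 → ∃ e ∈ T, ∃ f ∈ T, pos f = pos e + 1) :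
    ∃ a a' x : ℤ, (a' = a ∨ a' = a + 1) ∧ ∀ s, (s = a ∨ s = a' ∨ s = x) ↔ ∃ e ∈ T, pos e = s := by
  have h0 : T.card ≠ 0 := by simpa using hne.ne_empty
  have : T.card = 1 ∨ T.card = 2 ∨ T.card = 3 := by omega
  rcases this with h | h | h
  · obtain ⟨e, rfl⟩ := Finset.card_eq_one.1 h
    exact ⟨pos e, pos e, pos e, Or.inl rfl, fun s => by simp [eq_comm]⟩
  · obtain ⟨e, f, -, rfl⟩ := Finset.card_eq_two.1 h
    exact ⟨pos e, pos e, pos f, Or.inl rfl, fun s => by simp [eq_comm]⟩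
  · obtain ⟨e, he, f, hf, hef⟩ := hp h
    have hne : f ≠ e := by rintro rfl; omega
    have h1 : (T.erase e).card = 2 := by rw [Finset.card_erase_of_mem he, h]
    have h2 : ((T.erase e).erase f).card = 1 := by
      rw [Finset.card_erase_of_mem (Finset.mem_erase.2 ⟨hne, hf⟩), h1]
    obtain ⟨g, hg⟩ := Finset.card_eq_one.1 h2
    have hT : T = {e, f, g} := by
      rw [← hg, Finset.insert_erase (Finset.mem_erase.2 ⟨hne, hf⟩), Finset.insert_erase he]
    exact ⟨pos e, pos f, pos g, Or.inr hef, fun s => by rw [hT]; simp [eq_comm]⟩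

lemma geo {E : Type*} [DecidableEq E] (T U : Finset E) (pos : E → ℤ) (hinj : Function.Injective pos)
    (hT : T.Nonempty) (hTc : T.card ≤ 3) (hTp : T.card = 3 → ∃ e ∈ T, ∃ f ∈ T, pos f = pos e + 1)
    (hU : U.Nonempty) (hUc : U.card ≤ 3) (hUp : U.card = 3 → ∃ e ∈ U, ∃ f ∈ U, pos f = pos e + 1)
    (hTU : ∀ e f, e ∈ T → e ∈ U → f ∈ T → f ∈ U → e = f)
    (P Q : Finset (EuclideanSpace ℝ (Fin 3)))
    (hP : ∀ z, z ∈ P ↔ ∃ e ∈ T, mom (pos e) = z) (hQ : ∀ z, z ∈ Q ↔ ∃ e ∈ U, mom (pos e) = z)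
    (z : EuclideanSpace ℝ (Fin 3))
    (h1 : z ∈ convexHull ℝ (P : Set (EuclideanSpace ℝ (Fin 3))))
    (h2 : z ∈ convexHull ℝ (Q : Set (EuclideanSpace ℝ (Fin 3)))) :
    ∃ e ∈ T, e ∈ U ∧ z = mom (pos e) := by
  obtain ⟨a, a', x, ha, hA⟩ := triple_shape T pos hinj hT hTc hTp
  obtain ⟨b, b', y, hb, hB⟩ := triple_shape U pos hinj hU hUc hUp
  obtain ⟨c0, c1, c2, c3, p, hs1, hs2⟩ := sep_poly a a' x b b' y ha hb (by
    intro s t h1 h2 h3 h4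
    obtain ⟨e, he, rfl⟩ := (hA s).1 h1
    obtain ⟨e', he', hh⟩ := (hB _).1 h2
    obtain ⟨f, hf, rfl⟩ := (hA t).1 h3
    obtain ⟨f', hf', hh'⟩ := (hB _).1 h4
    obtain rfl := hinj hh
    obtain rfl := hinj hh'
    rw [hTU _ _ he he' hf hf'])
  obtain ⟨f, hf⟩ := exists_fun c1 c2 c3
  have ev : ∀ s : ℤ, (c0 : ℝ) + f (mom s) = ((c0 + c1 * s + c2 * s^2 + c3 * s^3 : ℤ) : ℝ) := by
    intro s; rw [hf]; push_cast; ring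
  have hz2 : (c0 : ℝ) + f z ≤ 0 := by
    have hsub : convexHull ℝ (Q : Set (EuclideanSpace ℝ (Fin 3))) ⊆ {w | f w ≤ -(c0:ℝ)} := by
      apply convexHull_min
      · intro w hw
        obtain ⟨e, he, rfl⟩ := (hQ w).1 hw
        have : (c0 : ℝ) + f (mom (pos e)) ≤ 0 := by
          rw [ev]; exact_mod_cast hs2 (pos e) ((hB _).2 ⟨e, he, rfl⟩)
        show f (mom (pos e)) ≤ -(c0:ℝ)
        linarith
      · exact convex_halfSpace_le f.isLinear _
    have : f z ≤ -(c0:ℝ) := hsub h2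
    linarith
  obtain ⟨hzP, hz0⟩ := hull_zero P f c0 (by
      intro w hw
      obtain ⟨e, he, rfl⟩ := (hP w).1 hw
      rw [ev]; exact_mod_cast (hs1 (pos e) ((hA _).2 ⟨e, he, rfl⟩)).1) (mom p) (by
      intro w hw hw0
      obtain ⟨e, he, rfl⟩ := (hP w).1 hw
      rw [ev] at hw0
      rw [((hs1 (pos e) ((hA _).2 ⟨e, he, rfl⟩)).2 (by exact_mod_cast hw0)).1]) z h1 hz2
  obtain ⟨e, he, rfl⟩ := (hP z).1 hzP
  rw [ev] at hz0
  obtain ⟨e', he', hh⟩ := (hB _).1 ((hs1 (pos e) ((hA _).2 ⟨e, he, rfl⟩)).2 (by exact_mod_cast hz0)).2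
  obtain rfl := hinj hh
  exact ⟨_, he, he', rfl⟩

/-- every finite simple graph of maximum degree at most `3` is the
intersection graph of (possibly degenerate) triangles in `ℝ³` that are pairwise disjoint
except possibly at shared corner points. -/
theorem stmt19 (n : ℕ) (G : SimpleGraph (Fin n))
    (hdeg : ∀ v : Fin n, ({u : Fin n | G.Adj v u}).ncard ≤ 3) :
    ∃ pts : Fin n → Finset (EuclideanSpace ℝ (Fin 3)),
      (∀ i, (pts i).card ≤ 3) ∧
      ∀ i j : Fin n, i ≠ j →
        (((convexHull ℝ (↑(pts i) : Set (EuclideanSpace ℝ (Fin 3)))) ∩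
            (convexHull ℝ (↑(pts j) : Set (EuclideanSpace ℝ (Fin 3))))).Nonempty
          ↔ G.Adj i j) ∧
        ((convexHull ℝ (↑(pts i) : Set (EuclideanSpace ℝ (Fin 3)))) ∩
            (convexHull ℝ (↑(pts j) : Set (EuclideanSpace ℝ (Fin 3))))
          ⊆ (↑(pts i) : Set (EuclideanSpace ℝ (Fin 3))) ∩
            (↑(pts j) : Set (EuclideanSpace ℝ (Fin 3)))) := by
  classical
  let nb : Fin n → Finset (Fin n) := fun v =>
    if (Finset.univ.filter (fun u => G.Adj v u)).Nonempty then Finset.univ.filter (fun u => G.Adj v u) else {v}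
  have nb_ne : ∀ v, (nb v).Nonempty := by
    intro v
    by_cases h : (Finset.univ.filter (fun u => G.Adj v u)).Nonempty
    · simp only [nb, if_pos h]; exact h
    · simp only [nb, if_neg h]; simp
  have nb_card : ∀ v, (nb v).card ≤ 3 := by
    intro v
    by_cases h : (Finset.univ.filter (fun u => G.Adj v u)).Nonempty
    · simp only [nb, if_pos h]
      have := hdeg v
      rwa [Set.ncard_eq_toFinset_card', Set.toFinset_setOf] at this
    · simp only [nb, if_neg h]; simp
  have nb_adj : ∀ v u, G.Adj v u → u ∈ nb v := by
    intro v u h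
    have h' : (Finset.univ.filter (fun u => G.Adj v u)).Nonempty := ⟨u, by simp [h]⟩
    simp only [nb, if_pos h']; simp [h]
  have nb_mem : ∀ v u, u ∈ nb v → u ≠ v → G.Adj v u := by
    intro v u h hne
    by_cases h' : (Finset.univ.filter (fun u => G.Adj v u)).Nonempty
    · simp only [nb, if_pos h'] at h; simpa using h
    · simp only [nb, if_neg h'] at h; simp at h; exact absurd h hne
  let t : Fin n → Finset (Sym2 (Fin n)) := fun v => (nb v).image (fun u => s(v, u))
  have t_mem : ∀ v e, e ∈ t v → v ∈ e := by
    intro v e he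
    obtain ⟨u, -, rfl⟩ := Finset.mem_image.1 he
    simp
  have t_two : ∀ u v e, u ≠ v → e ∈ t u → e ∈ t v → e = s(u, v) := by
    intro u v e huv h1 h2
    exact (Sym2.mem_and_mem_iff huv).1 ⟨t_mem u e h1, t_mem v e h2⟩
  have t_adj : ∀ u v, u ≠ v → s(u, v) ∈ t u → G.Adj u v := by
    intro u v huv h
    obtain ⟨w, hw, hh⟩ := Finset.mem_image.1 h
    have : w = v := Sym2.congr_right.1 hh
    subst this
    exact nb_mem u w hw huv.symm
  have t_ne : ∀ v, (t v).Nonempty := fun v => (nb_ne v).image _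
  have t_card : ∀ v, (t v).card ≤ 3 := fun v => Finset.card_image_le.trans (nb_card v)
  obtain ⟨pos, hinj, hpos⟩ := exists_pos t (by
    intro e u v w hu hv hw
    by_contra! h
    have h1 := t_two u v e h.1 hu hv
    have := t_mem w e hw
    rw [h1, Sym2.mem_iff] at this
    rcases this with h' | h'
    · exact h.2.2 h'.symm
    · exact h.2.1 h'.symm)
  have hmem : ∀ v z, z ∈ (t v).image (fun e => mom (pos e)) ↔ ∃ e ∈ t v, mom (pos e) = z := by
    intro v z; simp only [Finset.mem_image]
  refine ⟨fun v => (t v).image (fun e => mom (pos e)), fun v => Finset.card_image_le.trans (t_card v), ?_⟩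
  intro i j hij
  have key := fun z => geo (t i) (t j) pos hinj (t_ne i) (t_card i) (hpos i) (t_ne j) (t_card j) (hpos j)
    (fun e f h1 h2 h3 h4 => (t_two i j e hij h1 h2).trans (t_two i j f hij h3 h4).symm) _ _ (hmem i) (hmem j) z
  refine ⟨⟨?_, ?_⟩, ?_⟩
  · rintro ⟨z, h1, h2⟩
    obtain ⟨e, he, he', -⟩ := key z h1 h2
    have := t_two i j e hij he he'
    exact t_adj i j hij (this ▸ he)
  · intro h
    have h1 : s(i, j) ∈ t i := Finset.mem_image.2 ⟨j, nb_adj i j h, rfl⟩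
    have h2 : s(i, j) ∈ t j := Finset.mem_image.2 ⟨i, nb_adj j i h.symm, Sym2.eq_swap⟩
    exact ⟨mom (pos s(i, j)), subset_convexHull ℝ _ (Finset.mem_coe.2 ((hmem i _).2 ⟨_, h1, rfl⟩)),
      subset_convexHull ℝ _ (Finset.mem_coe.2 ((hmem j _).2 ⟨_, h2, rfl⟩))⟩
  · rintro z ⟨h1, h2⟩
    obtain ⟨e, he, he', hz⟩ := key z h1 h2
    exact ⟨Finset.mem_coe.2 ((hmem i _).2 ⟨_, he, hz.symm⟩), Finset.mem_coe.2 ((hmem j _).2 ⟨_, he', hz.symm⟩)⟩
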